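/- arXiv:0801.1328 — 2 statements merged into one kernel-verified Lean document; each statement's English description precedes it below -/
import Mathlib

section
/- Let G be a group and let c: G → ℝ satisfy c(gh) ≤ c(g) + c(h) and c(h g h⁻¹) = c(g) for all g, h ∈ G. Then for all a, b ∈ G and every integer k ≥ 1, c((ab)^k) ≥ c(a^k b) − (k−1)·c(b⁻¹). Consequently, the asymptotic invariant c̄(ab) := lim_{k→∞} c((ab)^k)/k satisfies c̄(ab) ≥ liminf_{k→∞} c(a^k b)/k − c(b⁻¹). -/
/-! Passing from `(a * b) ^ n * x` to `a ^ n * x` deletes `n` occurrences of `b`. Each deletion is a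
right multiplication by a conjugate of `b⁻¹`, so it raises `c` by at most `c b⁻¹`; this is
`apply_pow_mul_le`. Taking `n = k - 1` and `x = a * b` gives the finite inequality. Dividing by `k`
and letting `k → ∞` gives the asymptotic one. There the real-valued `liminf` is meaningful because
`c (a ^ k * b) / k` is bounded below, again by `apply_pow_mul_le`, now with `(1, a)` in place
of `(a, b)`. -/

/-- Removing the `n` factors `b` from `(a * b) ^ n * x` raises a subadditive conjugation-invariant
function by at most `n * c b⁻¹`. The free factor `x` makes the induction on `n` go through. -/
theorem apply_pow_mul_le {G : Type*} [Group G] (c : G → ℝ)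
    (hsub : ∀ g h : G, c (g * h) ≤ c g + c h)
    (hconj : ∀ g h : G, c (h * g * h⁻¹) = c g) (a b : G) (n : ℕ) (x : G) :
    c (a ^ n * x) ≤ c ((a * b) ^ n * x) + n * c b⁻¹ := by
  induction n generalizing x with
  | zero => simp
  | succ n ih =>
    have h1 := ih (a * x)
    have h2 := hsub ((a * b) ^ (n + 1) * x) (x⁻¹ * b⁻¹ * x⁻¹⁻¹)
    rw [hconj] at h2
    have e1 : (a * b) ^ (n + 1) * x * (x⁻¹ * b⁻¹ * x⁻¹⁻¹) = (a * b) ^ n * (a * x) := by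
      rw [pow_succ]; group
    have e2 : a ^ (n + 1) * x = a ^ n * (a * x) := by rw [pow_succ, mul_assoc]
    rw [e1] at h2
    rw [e2]
    push_cast
    linarith

/-- For a subadditive, conjugation-invariant `c` on a group:
`c ((a*b)^k) ≥ c (a^k * b) - (k-1) * c b⁻¹` for `k ≥ 1`, and consequently the asymptotic
invariant `c̄ (a*b) = lim c ((a*b)^k)/k` satisfies
`c̄ (a*b) ≥ liminf c (a^k * b)/k - c b⁻¹`. -/
theorem stmt13 {G : Type*} [Group G] (c : G → ℝ)
    (hsub : ∀ g h : G, c (g * h) ≤ c g + c h)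
    (hconj : ∀ g h : G, c (h * g * h⁻¹) = c g) :
    ∀ a b : G,
      (∀ k : ℕ, 1 ≤ k →
        c (a ^ k * b) - ((k : ℝ) - 1) * c b⁻¹ ≤ c ((a * b) ^ k)) ∧
      ∀ L : ℝ,
        Filter.Tendsto (fun k : ℕ => c ((a * b) ^ k) / (k : ℝ)) Filter.atTop (nhds L) →
        Filter.liminf (fun k : ℕ => c (a ^ k * b) / (k : ℝ)) Filter.atTop - c b⁻¹ ≤ L := by
  intro a b
  have key : ∀ k : ℕ, 1 ≤ k →
      c (a ^ k * b) - ((k : ℝ) - 1) * c b⁻¹ ≤ c ((a * b) ^ k) := by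
    intro k hk
    obtain ⟨n, rfl⟩ := Nat.exists_eq_add_of_le' hk
    have h := apply_pow_mul_le c hsub hconj a b n (a * b)
    rw [← mul_assoc, ← pow_succ, ← pow_succ] at h
    push_cast
    linarith
  refine ⟨key, fun L hL => ?_⟩
  have hlim : Filter.Tendsto (fun k : ℕ => c ((a * b) ^ k) / (k : ℝ) + c b⁻¹ - c b⁻¹ / (k : ℝ))
      Filter.atTop (nhds (L + c b⁻¹)) := by
    simpa using (hL.add_const (c b⁻¹)).sub (tendsto_const_div_atTop_nhds_zero_nat (c b⁻¹))
  have hle : (fun k : ℕ => c (a ^ k * b) / (k : ℝ)) ≤ᶠ[Filter.atTop]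
      fun k : ℕ => c ((a * b) ^ k) / (k : ℝ) + c b⁻¹ - c b⁻¹ / (k : ℝ) := by
    filter_upwards [Filter.eventually_ge_atTop 1] with k hk
    have hk0 : (0 : ℝ) < k := by exact_mod_cast hk
    have h := key k hk
    rw [div_le_iff₀ hk0]
    field_simp
    linarith
  have hbdd : Filter.IsBoundedUnder (· ≥ ·) Filter.atTop
      (fun k : ℕ => c (a ^ k * b) / (k : ℝ)) := by
    refine Filter.isBoundedUnder_of_eventually_ge (a := -|c b| - c a⁻¹) ?_
    filter_upwards [Filter.eventually_ge_atTop 1] with k hk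
    have hk1 : (1 : ℝ) ≤ k := by exact_mod_cast hk
    have h := apply_pow_mul_le c hsub hconj 1 a k b
    rw [one_pow, one_mul, one_mul] at h
    rw [le_div_iff₀ (by linarith)]
    nlinarith [neg_abs_le (c b), abs_nonneg (c b)]
  have h := Filter.liminf_le_liminf hle hbdd hlim.isBoundedUnder_le.isCoboundedUnder_ge
  rw [hlim.liminf_eq] at h
  linarith
end

section
/- Let Γ be a group, R a ring, and ν: R → ℝ ∪ {−∞} a map satisfying ν(1) = 0, ν(x + y) ≤ max(ν(x), ν(y)) and ν(x y) ≤ ν(x) + ν(y) for all x, y ∈ R. Let S: Γ → Rˣ be a group homomorphism into the units of R. Suppose that for every γ ∈ Γ there exist an integer m ≥ 1 and elements r, x ∈ R with r x = x r, ν(r) ≤ 0, x nilpotent, and S(γ)^m = r + x (as ring elements). Then for every γ ∈ Γ, ν(S(γ)^k) is a real number for each k and lim_{k→∞} ν(S(γ)^k)/k = 0. -/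
/-!
Powers of `S γ` have `ν` bounded above. Writing `(r + x) ^ k` by the binomial theorem, every
summand `r ^ i * x ^ (k - i) * choose` has `ν ≤ ν (x ^ (k - i))`: powers of `r` have `ν ≤ 0`, and
a positive integer multiple does not increase `ν` by the ultrametric inequality. As `x` is
nilpotent, only finitely many values `ν (x ^ j)` occur. Division with remainder by `m` passes from
powers of `S γ ^ m` to all powers of `S γ`. The same bound for `γ⁻¹`, together with
`0 = ν 1 ≤ ν (S γ ^ k) + ν (S γ⁻¹ ^ k)`, shows that `ν (S γ ^ k)` is real and bounded below in `k`,
so that dividing by `k` gives the limit `0`.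
-/

theorem exists_real_bound (g : ℕ → WithBot ℝ) (n : ℕ) :
    ∃ B : ℝ, ∀ i < n, g i ≤ (B : WithBot ℝ) := by
  have h : ∀ i, ∃ b : ℝ, g i ≤ (b : WithBot ℝ) := fun i => by
    induction g i with
    | bot => exact ⟨0, bot_le⟩
    | coe b => exact ⟨b, le_rfl⟩
  choose b hb using h
  obtain ⟨B, hB⟩ := ((Finset.range n).image b).exists_le
  refine ⟨B, fun i hi => (hb i).trans ?_⟩
  exact WithBot.coe_le_coe.2 (hB _ (Finset.mem_image_of_mem b (Finset.mem_range.2 hi)))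

/-- The values of `ν` on the powers of a commuting sum `r + x` with `ν r ≤ 0` and `x` nilpotent
are bounded above. -/
theorem exists_bound_add_nilpotent_pow {R : Type*} [Ring R] (ν : R → WithBot ℝ)
    (hone : ν 1 = 0)
    (hadd : ∀ x y : R, ν (x + y) ≤ max (ν x) (ν y))
    (hmul : ∀ x y : R, ν (x * y) ≤ ν x + ν y)
    {r x : R} (hc : Commute r x) (hr : ν r ≤ 0) (hx : IsNilpotent x) :
    ∃ B : ℝ, ∀ k : ℕ, ν ((r + x) ^ k) ≤ (B : WithBot ℝ) := by
  obtain ⟨N, hN⟩ := hx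
  obtain ⟨B, hB⟩ := exists_real_bound (fun i => ν (x ^ i)) (N + 1)
  have hxB : ∀ i, ν (x ^ i) ≤ (B : WithBot ℝ) := fun i => by
    rcases le_total N i with h | h
    · -- `ν 0` is not assumed to be `⊥`; it is bounded because `0 = x ^ N`.
      rw [pow_eq_zero_of_le h hN, ← hN]
      exact hB N (Nat.lt_succ_self N)
    · exact hB i (Nat.lt_succ_of_le h)
  have hrp : ∀ i, ν (r ^ i) ≤ 0 := fun i => by
    induction i with
    | zero => simp [hone]
    | succ i ih =>
      rw [pow_succ]
      exact (hmul _ _).trans (add_nonpos ih hr)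
  have hnat : ∀ (y : R) (n : ℕ), ν (y * ((n + 1 : ℕ) : R)) ≤ ν y := fun y n => by
    induction n with
    | zero => simp
    | succ n ih =>
      rw [Nat.cast_succ, mul_add, mul_one]
      exact (hadd _ _).trans (max_le ih le_rfl)
  refine ⟨B, fun k => ?_⟩
  rw [hc.add_pow]
  refine Finset.sum_induction_nonempty _ (fun y => ν y ≤ (B : WithBot ℝ))
    (fun a b ha hb => (hadd a b).trans (max_le ha hb)) ⟨0, by simp⟩ fun i hi => ?_
  -- The binomial coefficient is positive because `i ≤ k`.
  obtain ⟨c, hcc⟩ := Nat.exists_eq_succ_of_ne_zero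
    (Nat.choose_pos (Nat.lt_succ_iff.1 (Finset.mem_range.1 hi))).ne'
  rw [hcc]
  calc ν (r ^ i * x ^ (k - i) * ((c + 1 : ℕ) : R)) ≤ ν (r ^ i * x ^ (k - i)) := hnat _ c
    _ ≤ ν (r ^ i) + ν (x ^ (k - i)) := hmul _ _
    _ ≤ 0 + (B : WithBot ℝ) := add_le_add (hrp i) (hxB _)
    _ = (B : WithBot ℝ) := zero_add _

theorem exists_bound_pow_of_bound_pow_pow {R : Type*} [Ring R] (ν : R → WithBot ℝ)
    (hmul : ∀ x y : R, ν (x * y) ≤ ν x + ν y) {a : R} {m : ℕ} (hm : 1 ≤ m) {B : ℝ}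
    (hB : ∀ k : ℕ, ν ((a ^ m) ^ k) ≤ (B : WithBot ℝ)) :
    ∃ C : ℝ, ∀ k : ℕ, ν (a ^ k) ≤ (C : WithBot ℝ) := by
  obtain ⟨D, hD⟩ := exists_real_bound (fun i => ν (a ^ i)) m
  refine ⟨B + D, fun k => ?_⟩
  rw [← Nat.div_add_mod k m, pow_add, pow_mul, WithBot.coe_add]
  exact (hmul _ _).trans (add_le_add (hB _) (hD _ (Nat.mod_lt k hm)))


/-- If for every `γ` some power of the unit `S γ` has the form `r + x` with
`r x = x r`, `ν r ≤ 0` and `x` nilpotent, then `ν (S γ ^ k)` is real for every `k` and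
`ν (S γ ^ k) / k → 0`. -/
theorem stmt14 {Γ : Type*} [Group Γ] {R : Type*} [Ring R] (ν : R → WithBot ℝ)
    (hone : ν 1 = 0)
    (hadd : ∀ x y : R, ν (x + y) ≤ max (ν x) (ν y))
    (hmul : ∀ x y : R, ν (x * y) ≤ ν x + ν y)
    (S : Γ →* Rˣ)
    (hS : ∀ γ : Γ, ∃ m : ℕ, 1 ≤ m ∧ ∃ r x : R, r * x = x * r ∧ ν r ≤ 0 ∧
      IsNilpotent x ∧ ((S γ : Rˣ) : R) ^ m = r + x) :
    ∀ γ : Γ, ∃ f : ℕ → ℝ,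
      (∀ k : ℕ, ν (((S γ : Rˣ) : R) ^ k) = (f k : WithBot ℝ)) ∧
      Filter.Tendsto (fun k : ℕ => f k / (k : ℝ)) Filter.atTop (nhds 0) := by
  have bound : ∀ γ : Γ, ∃ C : ℝ, ∀ k : ℕ, ν (((S γ : Rˣ) : R) ^ k) ≤ (C : WithBot ℝ) := by
    intro γ
    obtain ⟨m, hm, r, x, hc, hr, hx, h⟩ := hS γ
    obtain ⟨B, hB⟩ := exists_bound_add_nilpotent_pow ν hone hadd hmul hc hr hx
    exact exists_bound_pow_of_bound_pow_pow ν hmul hm (fun k => by rw [h]; exact hB k)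
  intro γ
  obtain ⟨C, hC⟩ := bound γ
  obtain ⟨D, hD⟩ := bound γ⁻¹
  have key : ∀ k : ℕ, (0 : WithBot ℝ) ≤ ν (((S γ : Rˣ) : R) ^ k) + (D : WithBot ℝ) := fun k => by
    have h1 : ((S γ : Rˣ) : R) ^ k * ((S γ⁻¹ : Rˣ) : R) ^ k = 1 := by
      rw [← Units.val_pow_eq_pow_val, ← Units.val_pow_eq_pow_val, ← Units.val_mul, map_inv,
        inv_pow, mul_inv_cancel, Units.val_one]
    calc (0 : WithBot ℝ) = ν (((S γ : Rˣ) : R) ^ k * ((S γ⁻¹ : Rˣ) : R) ^ k) := by rw [h1, hone]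
      _ ≤ _ := hmul _ _
      _ ≤ _ := by gcongr; exact hD k
  have hf : ∀ k : ℕ, ∃ t : ℝ, ν (((S γ : Rˣ) : R) ^ k) = (t : WithBot ℝ) := fun k => by
    have h := key k
    generalize ν (((S γ : Rˣ) : R) ^ k) = w at h
    induction w with
    | bot => simp at h
    | coe t => exact ⟨t, rfl⟩
  choose f hf using hf
  refine ⟨f, hf, ?_⟩
  have hup : ∀ k, f k ≤ C := fun k => by
    have h := hC k
    rw [hf] at h
    exact WithBot.coe_le_coe.1 h
  have hlow : ∀ k, -D ≤ f k := fun k => by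
    have h := key k
    rw [hf, ← WithBot.coe_add, ← WithBot.coe_zero, WithBot.coe_le_coe] at h
    linarith
  refine tendsto_of_tendsto_of_tendsto_of_le_of_le (tendsto_const_div_atTop_nhds_zero_nat (-D))
    (tendsto_const_div_atTop_nhds_zero_nat C) (fun k => ?_) (fun k => ?_)
  · exact div_le_div_of_nonneg_right (hlow k) (Nat.cast_nonneg k)
  · exact div_le_div_of_nonneg_right (hup k) (Nat.cast_nonneg k)
end
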